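/- Let V be a finite-dimensional real vector space, B a nondegenerate symmetric bilinear form on V, and R a curvature operator on (V, B) satisfying the symmetric-space identity. Let B_𝔥 be a bilinear form on 𝔥 with B_𝔥 A (R Z W) = B (A Z) W for all A ∈ 𝔥, Z, W ∈ V, and define the bilinear form 𝔅 on 𝔥 × V by 𝔅 (A, X) (A', X') := B_𝔥 A A' + B X X'. Then 𝔅 is invariant under the symmetric-triple bracket: 𝔅 ⁅u, v⁆ w + 𝔅 v ⁅u, w⁆ = 0 for all u, v, w ∈ 𝔥 × V. (The orthogonal extension B_𝔥 ⊕ B_𝔭 of the metric is invariant under the adjoint action of the transvection Lie algebra 𝔤 = 𝔥 ⊕ 𝔭.) -/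

import Mathlib

/-!
The bracket on `𝔥 × V` splits the invariance identity into terms of three kinds.
* The term `B (A Y) Z + B Y (A Z)` vanishes because every `A ∈ 𝔥` is skew for `B`
  (`holonomySpan_skew`).
* The mixed terms cancel in pairs: `Bh D (R X Y) = B (D X) Y` by hypothesis, and the same holds for
  `Bh (R X Y) D` because `Bh` is symmetric (`holonomy_form_symm`). On generators this symmetry is
  the pair symmetry `B (R X Y Z) W = B (R Z W X) Y` of the curvature (`curvature_pair_symm`).
* The remaining term `Bh ⁅A, C⁆ D + Bh C ⁅A, D⁆` is linear in `D`. For `D = R Z W` the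
  symmetric-space identity gives `⁅A, D⁆ = R (A Z) W + R Z (A W)` (`lie_curvature`), and
  the defining property of `Bh` together with skewness of `A` finishes
  (`holonomy_form_invariant`).
-/

/-- The holonomy Lie algebra: the span of the curvature endomorphisms. -/
def holonomySpan {V : Type*} [AddCommGroup V] [Module ℝ V]
    (R : V →ₗ[ℝ] V →ₗ[ℝ] Module.End ℝ V) : Submodule ℝ (Module.End ℝ V) :=
  Submodule.span ℝ {T : Module.End ℝ V | ∃ X Y, R X Y = T}

section HolonomyHelpers

variable {V : Type*} [AddCommGroup V] [Module ℝ V]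

/-- Linear maps on `𝔥` are determined by their values on the curvature endomorphisms. -/
theorem holonomySpan_hom_ext {R : V →ₗ[ℝ] V →ₗ[ℝ] Module.End ℝ V} {M : Type*} [AddCommGroup M]
    [Module ℝ M] {f g : ↥(holonomySpan R) →ₗ[ℝ] M}
    (h : ∀ Z W, f ⟨R Z W, Submodule.subset_span ⟨Z, W, rfl⟩⟩
      = g ⟨R Z W, Submodule.subset_span ⟨Z, W, rfl⟩⟩) : f = g := by
  ext ⟨D, hD⟩
  refine Submodule.span_induction (p := fun D hD => f ⟨D, hD⟩ = g ⟨D, hD⟩) ?_ ?_ ?_ ?_ hD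
  · rintro _ ⟨Z, W, rfl⟩
    exact h Z W
  · exact (map_zero f).trans (map_zero g).symm
  · intro x y hx hy h1 h2
    have hf := map_add f ⟨x, hx⟩ ⟨y, hy⟩
    have hg := map_add g ⟨x, hx⟩ ⟨y, hy⟩
    rw [h1, h2, ← hg] at hf
    exact hf
  · intro a x hx h1
    have hf := map_smul f a ⟨x, hx⟩
    have hg := map_smul g a ⟨x, hx⟩
    rw [h1, ← hg] at hf
    exact hf

theorem holonomySpan_skew {B : V →ₗ[ℝ] V →ₗ[ℝ] ℝ} {R : V →ₗ[ℝ] V →ₗ[ℝ] Module.End ℝ V}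
    (hRskewAdj : ∀ X Y Z W, B (R X Y Z) W = - B Z (R X Y W))
    {A : Module.End ℝ V} (hA : A ∈ holonomySpan R) (Z W : V) : B (A Z) W = - B Z (A W) := by
  induction hA using Submodule.span_induction with
  | mem x hx => obtain ⟨X, Y, rfl⟩ := hx; exact hRskewAdj X Y Z W
  | zero => simp
  | add x y _ _ hx hy => simp only [LinearMap.add_apply, map_add, hx, hy]; ring
  | smul a x _ hx => simp [hx]

/-- The elements of `𝔥` act on the curvature operator as derivations. -/
theorem lie_curvature {R : V →ₗ[ℝ] V →ₗ[ℝ] Module.End ℝ V}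
    (hRsym : ∀ X Y Z W, ⁅R X Y, R Z W⁆ = R (R X Y Z) W + R Z (R X Y W))
    {A : Module.End ℝ V} (hA : A ∈ holonomySpan R) (Z W : V) :
    ⁅A, R Z W⁆ = R (A Z) W + R Z (A W) := by
  induction hA using Submodule.span_induction with
  | mem x hx => obtain ⟨X, Y, rfl⟩ := hx; exact hRsym X Y Z W
  | zero => simp [Ring.lie_def]
  | add x y _ _ hx hy =>
    have h : ⁅x + y, R Z W⁆ = ⁅x, R Z W⁆ + ⁅y, R Z W⁆ := by
      simp only [Ring.lie_def, add_mul, mul_add]; abel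
    simp only [h, hx, hy, LinearMap.add_apply, map_add]; abel
  | smul a x _ hx =>
    have h : ⁅a • x, R Z W⁆ = a • ⁅x, R Z W⁆ := by
      simp only [Ring.lie_def, smul_mul_assoc, mul_smul_comm, smul_sub]
    simp only [h, hx, LinearMap.smul_apply, map_smul, smul_add]

theorem lie_mem_holonomySpan {R : V →ₗ[ℝ] V →ₗ[ℝ] Module.End ℝ V}
    (hRsym : ∀ X Y Z W, ⁅R X Y, R Z W⁆ = R (R X Y Z) W + R Z (R X Y W))
    {A D : Module.End ℝ V} (hA : A ∈ holonomySpan R) (hD : D ∈ holonomySpan R) :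
    ⁅A, D⁆ ∈ holonomySpan R := by
  induction hD using Submodule.span_induction with
  | mem x hx =>
    obtain ⟨Z, W, rfl⟩ := hx
    rw [lie_curvature hRsym hA]
    exact add_mem (Submodule.subset_span ⟨_, _, rfl⟩) (Submodule.subset_span ⟨_, _, rfl⟩)
  | zero => simp [Ring.lie_def]
  | add x y _ _ hx hy =>
    have h : ⁅A, x + y⁆ = ⁅A, x⁆ + ⁅A, y⁆ := by
      simp only [Ring.lie_def, add_mul, mul_add]; abel
    rw [h]; exact add_mem hx hy
  | smul a x _ hx =>
    have h : ⁅A, a • x⁆ = a • ⁅A, x⁆ := by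
      simp only [Ring.lie_def, smul_mul_assoc, mul_smul_comm, smul_sub]
    rw [h]; exact Submodule.smul_mem _ a hx

/-- The adjoint action `D ↦ ⁅A, D⁆` of `A ∈ 𝔥` on `𝔥`. -/
def holonomyAd {R : V →ₗ[ℝ] V →ₗ[ℝ] Module.End ℝ V}
    (hRsym : ∀ X Y Z W, ⁅R X Y, R Z W⁆ = R (R X Y Z) W + R Z (R X Y W))
    (A : ↥(holonomySpan R)) : ↥(holonomySpan R) →ₗ[ℝ] ↥(holonomySpan R) where
  toFun D := ⟨⁅(A : Module.End ℝ V), (D : Module.End ℝ V)⁆,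
    lie_mem_holonomySpan hRsym A.2 D.2⟩
  map_add' D E := Subtype.ext (by simp [Ring.lie_def, add_mul, mul_add]; abel)
  map_smul' a D := Subtype.ext (by simp [Ring.lie_def, smul_sub])

/-- Pair symmetry of the curvature, a formal consequence of the two skew symmetries and the first
Bianchi identity. -/
theorem curvature_pair_symm {B : V →ₗ[ℝ] V →ₗ[ℝ] ℝ} {R : V →ₗ[ℝ] V →ₗ[ℝ] Module.End ℝ V}
    (hBsymm : ∀ X Y, B X Y = B Y X)
    (hRskew : ∀ X Y, R X Y = - R Y X)
    (hRskewAdj : ∀ X Y Z W, B (R X Y Z) W = - B Z (R X Y W))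
    (hRbianchi : ∀ X Y Z, R X Y Z + R Y Z X + R Z X Y = 0) (X Y Z W : V) :
    B (R X Y Z) W = B (R Z W X) Y := by
  have s1 : ∀ X Y Z W, B (R X Y Z) W = - B (R Y X Z) W := fun X Y Z W => by
    rw [hRskew X Y]; simp
  have s2 : ∀ X Y Z W, B (R X Y Z) W = - B (R X Y W) Z := fun X Y Z W => by
    rw [hRskewAdj, hBsymm]
  have b : ∀ X Y Z W, B (R X Y Z) W + B (R Y Z X) W + B (R Z X Y) W = 0 := fun X Y Z W => by
    simpa using congrArg (fun v => B v W) (hRbianchi X Y Z)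
  -- A linear combination of the Bianchi identities for the cyclic shifts of `(X, Y, Z, W)`.
  linarith [b X Y Z W, b Y Z W X, b Z W X Y, b W X Y Z,
    s2 X Y Z W, s2 Y Z X W, s2 Z X Y W, s2 Z W Y X, s2 W Y Z X, s2 W X Z Y,
    s2 X Z W Y, s2 X Y W Z, s2 Y W X Z, s2 Y Z W X, s2 W X Y Z, s2 Z W X Y,
    s1 X Z W Y, s1 Z X Y W, s1 Z X W Y, s1 W Y Z X, s1 Y W X Z, s1 W Y X Z]

/-- A bilinear form on `𝔥` with `Bh A (R Z W) = B (A Z) W` is symmetric. -/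
theorem holonomy_form_symm {B : V →ₗ[ℝ] V →ₗ[ℝ] ℝ} {R : V →ₗ[ℝ] V →ₗ[ℝ] Module.End ℝ V}
    (hpair : ∀ X Y Z W, B (R X Y Z) W = B (R Z W X) Y)
    {Bh : ↥(holonomySpan R) →ₗ[ℝ] ↥(holonomySpan R) →ₗ[ℝ] ℝ}
    (hBh : ∀ (A : ↥(holonomySpan R)) (Z W : V),
      Bh A ⟨R Z W, Submodule.subset_span ⟨Z, W, rfl⟩⟩ = B ((A : Module.End ℝ V) Z) W)
    (A D : ↥(holonomySpan R)) : Bh A D = Bh D A := by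
  have h : Bh = Bh.flip := by
    refine holonomySpan_hom_ext fun X Y => holonomySpan_hom_ext fun Z W => ?_
    rw [LinearMap.flip_apply, hBh, hBh]
    exact hpair X Y Z W
  exact congrArg (fun F => F A D) h

theorem holonomy_form_invariant {B : V →ₗ[ℝ] V →ₗ[ℝ] ℝ}
    {R : V →ₗ[ℝ] V →ₗ[ℝ] Module.End ℝ V}
    (hRskewAdj : ∀ X Y Z W, B (R X Y Z) W = - B Z (R X Y W))
    (hRsym : ∀ X Y Z W, ⁅R X Y, R Z W⁆ = R (R X Y Z) W + R Z (R X Y W))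
    {Bh : ↥(holonomySpan R) →ₗ[ℝ] ↥(holonomySpan R) →ₗ[ℝ] ℝ}
    (hBh : ∀ (A : ↥(holonomySpan R)) (Z W : V),
      Bh A ⟨R Z W, Submodule.subset_span ⟨Z, W, rfl⟩⟩ = B ((A : Module.End ℝ V) Z) W)
    (A C D : ↥(holonomySpan R)) :
    Bh (holonomyAd hRsym A C) D + Bh C (holonomyAd hRsym A D) = 0 := by
  have h : Bh (holonomyAd hRsym A C) + (Bh C).comp (holonomyAd hRsym A) = 0 := by
    refine holonomySpan_hom_ext fun Z W => ?_
    have key : holonomyAd hRsym A ⟨R Z W, Submodule.subset_span ⟨Z, W, rfl⟩⟩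
        = ⟨R ((A : Module.End ℝ V) Z) W, Submodule.subset_span ⟨_, _, rfl⟩⟩
          + ⟨R Z ((A : Module.End ℝ V) W), Submodule.subset_span ⟨_, _, rfl⟩⟩ :=
      Subtype.ext (lie_curvature hRsym A.2 Z W)
    have hsk := holonomySpan_skew hRskewAdj A.2 ((C : Module.End ℝ V) Z) W
    rw [LinearMap.add_apply, LinearMap.comp_apply, key, map_add, hBh, hBh, hBh]
    simp only [holonomyAd, LinearMap.coe_mk, AddHom.coe_mk, Ring.lie_def, LinearMap.sub_apply,
      Module.End.mul_apply, map_sub, LinearMap.zero_apply]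
    linarith
  exact congrArg (fun F => F D) h

end HolonomyHelpers

/-- The orthogonal extension 𝔅 = B_𝔥 ⊕ B of the metric to 𝔥 × V is invariant under the
symmetric-triple bracket (adjoint action of the transvection Lie algebra). -/
theorem extended_metric_invariant
    {V : Type*} [AddCommGroup V] [Module ℝ V] [FiniteDimensional ℝ V]
    (B : V →ₗ[ℝ] V →ₗ[ℝ] ℝ)
    (hBsymm : ∀ X Y, B X Y = B Y X)
    (hBnd : ∀ X, (∀ Y, B X Y = 0) → X = 0)
    (R : V →ₗ[ℝ] V →ₗ[ℝ] Module.End ℝ V)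
    (hRskew : ∀ X Y, R X Y = - R Y X)
    (hRskewAdj : ∀ X Y Z W, B (R X Y Z) W = - B Z (R X Y W))
    (hRbianchi : ∀ X Y Z, R X Y Z + R Y Z X + R Z X Y = 0)
    (hRsym : ∀ X Y Z W, ⁅R X Y, R Z W⁆ = R (R X Y Z) W + R Z (R X Y W))
    (Bh : ↥(holonomySpan R) →ₗ[ℝ] ↥(holonomySpan R) →ₗ[ℝ] ℝ)
    (hBh : ∀ (A : ↥(holonomySpan R)) (Z W : V),
      Bh A ⟨R Z W, Submodule.subset_span ⟨Z, W, rfl⟩⟩ = B ((A : Module.End ℝ V) Z) W)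
    (br : (↥(holonomySpan R) × V) → (↥(holonomySpan R) × V) → (↥(holonomySpan R) × V))
    (hbr1 : ∀ u v, ((br u v).1 : Module.End ℝ V)
      = ⁅(u.1 : Module.End ℝ V), (v.1 : Module.End ℝ V)⁆ + R u.2 v.2)
    (hbr2 : ∀ u v, (br u v).2 = (u.1 : Module.End ℝ V) v.2 - (v.1 : Module.End ℝ V) u.2) :
    ∀ u v w : ↥(holonomySpan R) × V,
      (Bh (br u v).1 w.1 + B (br u v).2 w.2) + (Bh v.1 (br u w).1 + B v.2 (br u w).2) = 0 := by
  rintro ⟨A, X⟩ ⟨C, Y⟩ ⟨D, Z⟩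
  have hsymm := holonomy_form_symm
    (curvature_pair_symm hBsymm hRskew hRskewAdj hRbianchi) hBh
  have hbr1' : ∀ u v, (br u v).1 = holonomyAd hRsym u.1 v.1
      + ⟨R u.2 v.2, Submodule.subset_span ⟨u.2, v.2, rfl⟩⟩ :=
    fun u v => Subtype.ext (hbr1 u v)
  have hinv := holonomy_form_invariant hRskewAdj hRsym hBh A C D
  have hsk := holonomySpan_skew hRskewAdj A.2 Y Z
  have hRXY := (hsymm ⟨R X Y, Submodule.subset_span ⟨X, Y, rfl⟩⟩ D).trans (hBh D X Y)
  have hRXZ := hBh C X Z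
  simp only [hbr1', hbr2, map_add, map_sub, LinearMap.add_apply, LinearMap.sub_apply]
  have hDX := hBsymm ((D : Module.End ℝ V) X) Y
  linarith
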